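/- arXiv:2602.14987 — 4 statements merged into one kernel-verified Lean document; each statement's English description precedes it below -/
import Mathlib

section
/- Let S and Z be finite nonempty types, n : ℕ, τ : Fin (n+1) → Z a trace, O : S → Z → ℝ with 0 ≤ O s z, and ρ : (Fin (n+1) → S) → ℝ with 0 ≤ ρ π ≤ 1 for all π. Let (ι₀, P₀) be a stochastic pair with 0 < ∑_π w_{ι₀,P₀}(π). Let ιl_m, ιu_m : S → ℝ and Pl_m, Pu_m : S → S → ℝ (m ∈ ℕ) be sequences of interval bounds such that for all m: ιl_m s ≤ ι₀ s ≤ ιu_m s and Pl_m s s' ≤ P₀ s s' ≤ Pu_m s s' for all s, s', and such that ιl_m s → ι₀ s, ιu_m s → ι₀ s, Pl_m s s' → P₀ s s', and Pu_m s s' → P₀ s s' as m → ∞. Define the interval-HMM monitor value M_m = sSup { R_{ι,P}(τ) | (ι,P) stochastic, ιl_m s ≤ ι s ≤ ιu_m s for all s, Pl_m s s' ≤ P s s' ≤ Pu_m s s' for all s, s', and 0 < ∑_π w_{ι,P}(π) }. Then M_m → R_{ι₀,P₀}(τ) as m → ∞; that is, as the learned probability intervals converge to the true transition probabilities, the induced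 cautious monitors converge to the ideal monitor on every trace of positive probability. -/
/-!
The conditional risk is a quotient of polynomials in `(ι, P)`, hence continuous wherever the trace
has nonzero weight. As the interval bounds converge, the boxes `[ιl, ιu] × [Pl, Pu]` shrink to the
point `(ι₀, P₀)`, so their images under the risk shrink to `condRisk τ O ρ ι₀ P₀`. Each closed
neighbourhood of this limit eventually contains the admissible risks, hence also their supremum,
which lies in the closure of the set of risks.
-/

open Finset Filter

/-- The weight of a path `π` in an HMM with initial distribution `ι`,
transition matrix `P`, and observation kernel `O`, given a trace `τ`. -/
noncomputable def pathWeight {S Z : Type*} [Fintype S] {n : ℕ}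
    (τ : Fin (n + 1) → Z) (O : S → Z → ℝ) (ι : S → ℝ) (P : S → S → ℝ)
    (π : Fin (n + 1) → S) : ℝ :=
  ι (π 0) * (∏ i : Fin n, P (π i.castSucc) (π i.succ)) *
    ∏ i : Fin (n + 1), O (π i) (τ i)

/-- The conditional expected risk of a trace `τ`. -/
noncomputable def condRisk {S Z : Type*} [Fintype S] {n : ℕ}
    (τ : Fin (n + 1) → Z) (O : S → Z → ℝ) (ρ : (Fin (n + 1) → S) → ℝ)
    (ι : S → ℝ) (P : S → S → ℝ) : ℝ :=
  (∑ π : Fin (n + 1) → S, pathWeight τ O ι P π * ρ π) /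
    ∑ π : Fin (n + 1) → S, pathWeight τ O ι P π

/-- The pair `(ι, P)` is stochastic. -/
def Stochastic {S : Type*} [Fintype S] (ι : S → ℝ) (P : S → S → ℝ) : Prop :=
  (∀ s, 0 ≤ ι s) ∧ (∀ s s', 0 ≤ P s s') ∧ (∑ s, ι s = 1) ∧ ∀ s, ∑ s', P s s' = 1

theorem tendstoIccClass_comap {X Y : Type*} [Preorder X] [Preorder Y] {g : X → Y}
    (hg : Monotone g) (l₁ l₂ : Filter Y) [TendstoIxxClass Set.Icc l₁ l₂] :
    TendstoIxxClass Set.Icc (comap g l₁) (comap g l₂) where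
  tendsto_Ixx := by
    rw [smallSets_comap_eq_comap_image, tendsto_comap_iff]
    exact ((tendsto_comap.comp tendsto_fst).Icc (tendsto_comap.comp tendsto_snd)).smallSets_mono
      (.of_forall fun _ => hg.image_Icc_subset)

theorem tendstoIxxClass_iInf {ι : Sort*} {X : Type*} {Ixx : X → X → Set X} {l₁ l₂ : ι → Filter X}
    (h : ∀ i, TendstoIxxClass Ixx (l₁ i) (l₂ i)) : TendstoIxxClass Ixx (⨅ i, l₁ i) (⨅ i, l₂ i) where
  tendsto_Ixx := by
    rw [smallSets_iInf]
    exact tendsto_iInf.2 fun i =>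
      (h i).tendsto_Ixx.mono_left (prod_mono (iInf_le _ i) (iInf_le _ i))

instance tendstoIccClass_nhds_prod {X Y : Type*} [Preorder X] [Preorder Y] [TopologicalSpace X]
    [TopologicalSpace Y] (p : X × Y) [TendstoIxxClass Set.Icc (nhds p.1) (nhds p.1)]
    [TendstoIxxClass Set.Icc (nhds p.2) (nhds p.2)] :
    TendstoIxxClass Set.Icc (nhds p) (nhds p) := by
  have := tendstoIccClass_comap (monotone_fst (α := X) (β := Y)) (nhds p.1) (nhds p.1)
  have := tendstoIccClass_comap (monotone_snd (α := X) (β := Y)) (nhds p.2) (nhds p.2)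
  rw [nhds_prod_eq, prod_eq_inf]
  exact tendstoIxxClass_inf

-- Mathlib's instance for pi types asks for an `OrderTopology` on each factor, which the rows
-- `S → ℝ` of a transition matrix do not carry.
instance tendstoIccClass_nhds_pi {ι : Type*} {X : ι → Type*} [∀ i, Preorder (X i)]
    [∀ i, TopologicalSpace (X i)] (f : ∀ i, X i)
    [∀ i, TendstoIxxClass Set.Icc (nhds (f i)) (nhds (f i))] :
    TendstoIxxClass Set.Icc (nhds f) (nhds f) := by
  rw [nhds_pi, Filter.pi]
  exact tendstoIxxClass_iInf fun i =>
    tendstoIccClass_comap (Function.monotone_eval i) (nhds (f i)) (nhds (f i))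

theorem tendsto_sSup_of_tendsto_smallSets {α Y : Type*} [ConditionallyCompleteLinearOrder Y]
    [TopologicalSpace Y] [OrderTopology Y] {l : Filter α} {A : α → Set Y} {y : Y}
    (hA : Tendsto A l (nhds y).smallSets) (hne : ∀ᶠ i in l, (A i).Nonempty) :
    Tendsto (fun i => sSup (A i)) l (nhds y) := by
  obtain ⟨b, hb⟩ := isBounded_le_nhds y
  have hbdd : ∀ᶠ i in l, BddAbove (A i) :=
    (tendsto_smallSets_iff.1 hA _ hb).mono fun i hi => ⟨b, hi⟩
  refine (closed_nhds_basis y).tendsto_right_iff.2 fun V ⟨hV, hVclosed⟩ => ?_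
  filter_upwards [tendsto_smallSets_iff.1 hA V hV, hne, hbdd] with i hAV hne hbdd
  exact closure_minimal hAV hVclosed (csSup_mem_closure hne hbdd)

section HiddenMarkovModel

variable {S Z : Type*} [Fintype S] {n : ℕ} (τ : Fin (n + 1) → Z) (O : S → Z → ℝ)

theorem continuous_pathWeight (π : Fin (n + 1) → S) :
    Continuous fun q : (S → ℝ) × (S → S → ℝ) => pathWeight τ O q.1 q.2 π := by
  unfold pathWeight
  fun_prop

variable (ρ : (Fin (n + 1) → S) → ℝ)

theorem continuousAt_condRisk {q₀ : (S → ℝ) × (S → S → ℝ)}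
    (h : ∑ π : Fin (n + 1) → S, pathWeight τ O q₀.1 q₀.2 π ≠ 0) :
    ContinuousAt (fun q : (S → ℝ) × (S → S → ℝ) => condRisk τ O ρ q.1 q.2) q₀ := by
  have hw := continuous_pathWeight τ O
  exact ContinuousAt.div (by fun_prop) (by fun_prop) h

/-- The risks of the trace `τ` under the stochastic pairs that respect the interval bounds of an
interval HMM; the monitor of the interval HMM reports the supremum of this set. Only pairs giving
`τ` positive weight are admitted, since `condRisk` is the junk value `x / 0 = 0` at weight zero. -/
def admissibleRisks (ιl ιu : S → ℝ) (Pl Pu : S → S → ℝ) : Set ℝ :=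
  {x | ∃ ι P, Stochastic ι P ∧
    (∀ s, ιl s ≤ ι s ∧ ι s ≤ ιu s) ∧
    (∀ s s', Pl s s' ≤ P s s' ∧ P s s' ≤ Pu s s') ∧
    (0 < ∑ π : Fin (n + 1) → S, pathWeight τ O ι P π) ∧
    x = condRisk τ O ρ ι P}

theorem admissibleRisks_subset_image_Icc (ιl ιu : S → ℝ) (Pl Pu : S → S → ℝ) :
    admissibleRisks τ O ρ ιl ιu Pl Pu ⊆
      (fun q : (S → ℝ) × (S → S → ℝ) => condRisk τ O ρ q.1 q.2) ''
        Set.Icc (ιl, Pl) (ιu, Pu) := by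
  rintro _ ⟨ι, P, -, hι, hP, -, rfl⟩
  exact ⟨(ι, P), ⟨⟨fun s => (hι s).1, fun s s' => (hP s s').1⟩,
    ⟨fun s => (hι s).2, fun s s' => (hP s s').2⟩⟩, rfl⟩

variable {τ O} {α : Type*} {l : Filter α} {ι₀ : S → ℝ} {P₀ : S → S → ℝ}
  {ιl ιu : α → S → ℝ} {Pl Pu : α → S → S → ℝ}

theorem tendsto_admissibleRisks_smallSets
    (hτ : ∑ π : Fin (n + 1) → S, pathWeight τ O ι₀ P₀ π ≠ 0)
    (hιl : Tendsto ιl l (nhds ι₀)) (hιu : Tendsto ιu l (nhds ι₀))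
    (hPl : Tendsto Pl l (nhds P₀)) (hPu : Tendsto Pu l (nhds P₀)) :
    Tendsto (fun i => admissibleRisks τ O ρ (ιl i) (ιu i) (Pl i) (Pu i)) l
      (nhds (condRisk τ O ρ ι₀ P₀)).smallSets := by
  have hIcc : Tendsto (fun i => Set.Icc (ιl i, Pl i) (ιu i, Pu i)) l (nhds (ι₀, P₀)).smallSets :=
    (hιl.prodMk_nhds hPl).Icc (hιu.prodMk_nhds hPu)
  have hcont := continuousAt_condRisk τ O ρ (q₀ := (ι₀, P₀)) hτ
  exact (hcont.tendsto.image_smallSets.comp hIcc).smallSets_mono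
    (.of_forall fun i => admissibleRisks_subset_image_Icc τ O ρ _ _ _ _)

theorem ihmm_monitor_tendsto_ideal_general
    (hτ : ∑ π : Fin (n + 1) → S, pathWeight τ O ι₀ P₀ π ≠ 0)
    (hne : ∀ᶠ i in l, (admissibleRisks τ O ρ (ιl i) (ιu i) (Pl i) (Pu i)).Nonempty)
    (hιl : Tendsto ιl l (nhds ι₀)) (hιu : Tendsto ιu l (nhds ι₀))
    (hPl : Tendsto Pl l (nhds P₀)) (hPu : Tendsto Pu l (nhds P₀)) :
    Tendsto (fun i => sSup (admissibleRisks τ O ρ (ιl i) (ιu i) (Pl i) (Pu i))) l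
      (nhds (condRisk τ O ρ ι₀ P₀)) :=
  tendsto_sSup_of_tendsto_smallSets (tendsto_admissibleRisks_smallSets ρ hτ hιl hιu hPl hPu) hne

end HiddenMarkovModel

/-- As the learned probability intervals converge to the true transition
probabilities, the induced cautious (interval-HMM) monitors converge to the
ideal monitor on every trace of positive probability. -/
theorem ihmm_monitor_tendsto_ideal
    {S Z : Type*} [Fintype S] [Nonempty S] [Fintype Z] [Nonempty Z]
    (n : ℕ) (τ : Fin (n + 1) → Z) (O : S → Z → ℝ) (hO : ∀ s z, 0 ≤ O s z)
    (ρ : (Fin (n + 1) → S) → ℝ) (hρ : ∀ π, 0 ≤ ρ π ∧ ρ π ≤ 1)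
    (ι₀ : S → ℝ) (P₀ : S → S → ℝ) (h₀ : Stochastic ι₀ P₀)
    (hpos : 0 < ∑ π : Fin (n + 1) → S, pathWeight τ O ι₀ P₀ π)
    (ιl ιu : ℕ → S → ℝ) (Pl Pu : ℕ → S → S → ℝ)
    (hι₀ : ∀ m s, ιl m s ≤ ι₀ s ∧ ι₀ s ≤ ιu m s)
    (hP₀ : ∀ m s s', Pl m s s' ≤ P₀ s s' ∧ P₀ s s' ≤ Pu m s s')
    (hιl : ∀ s, Tendsto (fun m => ιl m s) atTop (nhds (ι₀ s)))
    (hιu : ∀ s, Tendsto (fun m => ιu m s) atTop (nhds (ι₀ s)))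
    (hPl : ∀ s s', Tendsto (fun m => Pl m s s') atTop (nhds (P₀ s s')))
    (hPu : ∀ s s', Tendsto (fun m => Pu m s s') atTop (nhds (P₀ s s'))) :
    Tendsto (fun m =>
        sSup {x : ℝ | ∃ ι P, Stochastic ι P ∧
          (∀ s, ιl m s ≤ ι s ∧ ι s ≤ ιu m s) ∧
          (∀ s s', Pl m s s' ≤ P s s' ∧ P s s' ≤ Pu m s s') ∧
          (0 < ∑ π : Fin (n + 1) → S, pathWeight τ O ι P π) ∧
          x = condRisk τ O ρ ι P})
      atTop (nhds (condRisk τ O ρ ι₀ P₀)) :=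
  ihmm_monitor_tendsto_ideal_general ρ hpos.ne'
    (.of_forall fun m => ⟨_, ι₀, P₀, h₀, hι₀ m, hP₀ m, hpos, rfl⟩)
    (tendsto_pi_nhds.2 hιl) (tendsto_pi_nhds.2 hιu)
    (tendsto_pi_nhds.2 fun s => tendsto_pi_nhds.2 (hPl s))
    (tendsto_pi_nhds.2 fun s => tendsto_pi_nhds.2 (hPu s))
end

section
/- Let l, u ∈ ℝ with 0 ≤ l ≤ u ≤ 1, strengths n↓, n↑ ∈ ℝ with 0 ≤ n↓ ≤ n↑, and k, N ∈ ℝ with N > 0 and 0 ≤ k ≤ N. Define the updated interval endpoints by l' = (n↑·l + k)/(n↑ + N) if l ≤ k/N and l' = (n↓·l + k)/(n↓ + N) otherwise, and u' = (n↑·u + k)/(n↑ + N) if k/N ≤ u and u' = (n↓·u + k)/(n↓ + N) otherwise. Then 0 ≤ l' ≤ u' ≤ 1; that is, the LUI update rule with case-dependent strengths always produces valid probability intervals. -/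
/-!
The updated estimate `(n * p + k) / (n + N)` is the average of the prior `p` and the empirical
frequency `k / N` with weights `n` and `N`. Raising the strength `n` pulls it towards `p`, so the
case distinction on the sign of `k / N - p` makes the new lower endpoint the smaller, and the new
upper endpoint the larger, of the two updates with the extreme strengths. Monotonicity in `p` at
a common strength then separates the endpoints.
-/

section

variable {K : Type*} [Field K]

/-- The estimate `p`, regarded as the success frequency of `n` earlier trials, after `k` successes
in `N` further trials. The counts are field elements, since strengths need not be integers. -/
def strengthUpdate (N k n p : K) : K := (n * p + k) / (n + N)

theorem strengthUpdate_sub_strengthUpdate {N k n m p : K} (hm : m + N ≠ 0) (hn : n + N ≠ 0) :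
    strengthUpdate N k n p - strengthUpdate N k m p =
      (n - m) * (p * N - k) / ((n + N) * (m + N)) := by
  unfold strengthUpdate
  field_simp
  ring

variable [LinearOrder K]

/-- The LUI update of a lower endpoint `l` with strength interval `[nlo, nup]` after `k` successes
in `N` trials. -/
def luiLower (N k nlo nup l : K) : K :=
  if l ≤ k / N then strengthUpdate N k nup l else strengthUpdate N k nlo l

/-- The LUI update of an upper endpoint `u` with strength interval `[nlo, nup]` after `k` successes
in `N` trials. -/
def luiUpper (N k nlo nup u : K) : K :=
  if k / N ≤ u then strengthUpdate N k nup u else strengthUpdate N k nlo u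

variable [IsStrictOrderedRing K] {N k n nlo nup p l u a b : K}

theorem strengthUpdate_mono (hn : 0 ≤ n) (hN : 0 ≤ n + N) : Monotone (strengthUpdate N k n) := by
  intro p q hpq
  unfold strengthUpdate
  gcongr

theorem le_strengthUpdate (hn : 0 ≤ n) (hN : 0 < n + N) (hp : a ≤ p) (hk : a * N ≤ k) :
    a ≤ strengthUpdate N k n p := by
  rw [strengthUpdate, le_div_iff₀ hN]
  calc a * (n + N) = n * a + a * N := by ring
    _ ≤ n * p + k := by gcongr

theorem strengthUpdate_le (hn : 0 ≤ n) (hN : 0 < n + N) (hp : p ≤ b) (hk : k ≤ b * N) :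
    strengthUpdate N k n p ≤ b := by
  rw [strengthUpdate, div_le_iff₀ hN]
  calc n * p + k ≤ n * b + b * N := by gcongr
    _ = b * (n + N) := by ring

theorem strengthUpdate_monotoneOn_strength (hp : k ≤ p * N) :
    MonotoneOn (fun n ↦ strengthUpdate N k n p) (Set.Ioi (-N)) := by
  intro m hm n hn hmn
  have hmN : 0 < m + N := neg_lt_iff_pos_add.mp hm
  have hnN : 0 < n + N := neg_lt_iff_pos_add.mp hn
  rw [← sub_nonneg, strengthUpdate_sub_strengthUpdate hmN.ne' hnN.ne']
  exact div_nonneg (mul_nonneg (sub_nonneg.mpr hmn) (sub_nonneg.mpr hp)) (mul_pos hnN hmN).le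

theorem strengthUpdate_antitoneOn_strength (hp : p * N ≤ k) :
    AntitoneOn (fun n ↦ strengthUpdate N k n p) (Set.Ioi (-N)) := by
  intro m hm n hn hmn
  have hmN : 0 < m + N := neg_lt_iff_pos_add.mp hm
  have hnN : 0 < n + N := neg_lt_iff_pos_add.mp hn
  rw [← sub_nonpos, strengthUpdate_sub_strengthUpdate hmN.ne' hnN.ne']
  exact div_nonpos_of_nonpos_of_nonneg
    (mul_nonpos_of_nonneg_of_nonpos (sub_nonneg.mpr hmn) (sub_nonpos.mpr hp)) (mul_pos hnN hmN).le

theorem luiLower_eq_min (hN : 0 < N) (hlo : -N < nlo) (hn : nlo ≤ nup) :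
    luiLower N k nlo nup l = min (strengthUpdate N k nlo l) (strengthUpdate N k nup l) := by
  have hup : -N < nup := hlo.trans_le hn
  unfold luiLower
  split_ifs with hl
  · exact (min_eq_right
      (strengthUpdate_antitoneOn_strength ((le_div_iff₀ hN).mp hl) hlo hup hn)).symm
  · exact (min_eq_left
      (strengthUpdate_monotoneOn_strength ((div_le_iff₀ hN).mp (not_le.mp hl).le) hlo hup hn)).symm

theorem luiUpper_eq_max (hN : 0 < N) (hlo : -N < nlo) (hn : nlo ≤ nup) :
    luiUpper N k nlo nup u = max (strengthUpdate N k nlo u) (strengthUpdate N k nup u) := by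
  have hup : -N < nup := hlo.trans_le hn
  unfold luiUpper
  split_ifs with hu
  · exact (max_eq_right
      (strengthUpdate_monotoneOn_strength ((div_le_iff₀ hN).mp hu) hlo hup hn)).symm
  · exact (max_eq_left
      (strengthUpdate_antitoneOn_strength ((le_div_iff₀ hN).mp (not_le.mp hu).le) hlo hup hn)).symm

theorem lui_update_valid_interval_general (hal : a ≤ l) (hlu : l ≤ u) (hub : u ≤ b)
    (hlo : 0 ≤ nlo) (hn : nlo ≤ nup) (hN : 0 < N) (hak : a ≤ k / N) (hkb : k / N ≤ b) :
    a ≤ luiLower N k nlo nup l ∧ luiLower N k nlo nup l ≤ luiUpper N k nlo nup u ∧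
      luiUpper N k nlo nup u ≤ b := by
  have hup : 0 ≤ nup := hlo.trans hn
  have hloN : 0 < nlo + N := add_pos_of_nonneg_of_pos hlo hN
  have hupN : 0 < nup + N := add_pos_of_nonneg_of_pos hup hN
  have haN : a * N ≤ k := (le_div_iff₀ hN).mp hak
  have hbN : k ≤ b * N := (div_le_iff₀ hN).mp hkb
  have hloN' : -N < nlo := neg_lt_iff_pos_add.mpr hloN
  rw [luiLower_eq_min hN hloN' hn, luiUpper_eq_max hN hloN' hn]
  refine ⟨le_min (le_strengthUpdate hlo hloN hal haN) (le_strengthUpdate hup hupN hal haN), ?_,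
    max_le (strengthUpdate_le hlo hloN hub hbN) (strengthUpdate_le hup hupN hub hbN)⟩
  calc min (strengthUpdate N k nlo l) (strengthUpdate N k nup l)
      ≤ strengthUpdate N k nup l := min_le_right _ _
    _ ≤ strengthUpdate N k nup u := strengthUpdate_mono hup hupN.le hlu
    _ ≤ max (strengthUpdate N k nlo u) (strengthUpdate N k nup u) := le_max_right _ _

end

/-- The LUI update rule with case-dependent strengths always produces valid
probability intervals. -/
theorem lui_update_valid_interval (l u nlo nup k N : ℝ)
    (hl0 : 0 ≤ l) (hlu : l ≤ u) (hu1 : u ≤ 1)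
    (hnlo : 0 ≤ nlo) (hn : nlo ≤ nup) (hN : 0 < N) (hk0 : 0 ≤ k) (hkN : k ≤ N) :
    0 ≤ (if l ≤ k / N then (nup * l + k) / (nup + N) else (nlo * l + k) / (nlo + N)) ∧
      (if l ≤ k / N then (nup * l + k) / (nup + N) else (nlo * l + k) / (nlo + N)) ≤
        (if k / N ≤ u then (nup * u + k) / (nup + N) else (nlo * u + k) / (nlo + N)) ∧
      (if k / N ≤ u then (nup * u + k) / (nup + N) else (nlo * u + k) / (nlo + N)) ≤ 1 :=
  lui_update_valid_interval_general hl0 hlu hu1 hnlo hn hN (div_nonneg hk0 hN.le)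
    (div_le_one_of_le₀ hkN hN.le)
end

section
/- Let n₀ > 0, x₀ ∈ ℝ, N, k : ℕ → ℝ with N_j > 0 for all j, and p ∈ ℝ. Define n_{j+1} = n_j + N_j and x_{j+1} = (n_j·x_j + k_j)/(n_j + N_j), and set S_K = ∑_{j<K} N_j and T_K = ∑_{j<K} k_j. If S_K → ∞ and T_K / S_K → p as K → ∞, then x_K → p; that is, the LUI estimate converges to the true probability whenever the cumulative empirical frequency does, regardless of the initial estimate, the initial strength, and how many samples are processed per iteration. -/
open Finset Filter

/-! Both the strength `n` and the weighted estimate `n • x` change by an additive increment at each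
step, so they telescope: `n K = a + S K` and `n K • x K = b + T K`, where `S` and `T` are the
partial sums of `N` and `k`. Hence `x K = (a + S K)⁻¹ • (b + T K)`, and as `S K → ∞` the constants
`a` and `b` are negligible, which leaves the limit of `(S K)⁻¹ • T K`. -/

theorem exists_eventually_eq_add_sum_range {G : Type*} [AddCommGroup G] {f g : ℕ → G}
    (h : ∀ᶠ j in atTop, f (j + 1) = f j + g j) :
    ∃ c, ∀ᶠ K in atTop, f K = c + ∑ j ∈ range K, g j := by
  obtain ⟨J, hJ⟩ := eventually_atTop.1 h
  refine ⟨f J - ∑ j ∈ range J, g j, eventually_atTop.2 ⟨J, fun K hK => ?_⟩⟩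
  induction K, hK using Nat.le_induction with
  | base => rw [sub_add_cancel]
  | succ K hK ih => rw [hJ K hK, sum_range_succ, ← add_assoc, ← ih]

section OrderedField

variable {𝕜 : Type*} [Field 𝕜] [LinearOrder 𝕜] [IsStrictOrderedRing 𝕜] [TopologicalSpace 𝕜]
  [OrderTopology 𝕜]

theorem tendsto_inv_const_add_mul_self {ι : Type*} {l : Filter ι} {S : ι → 𝕜}
    (hS : Tendsto S l atTop) (a : 𝕜) :
    Tendsto (fun i => (a + S i)⁻¹ * S i) l (nhds 1) := by
  have haS : Tendsto (fun i => a + S i) l atTop := tendsto_atTop_add_const_left l a hS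
  have hlim : Tendsto (fun i => 1 - (a + S i)⁻¹ * a) l (nhds 1) := by
    simpa using (haS.inv_tendsto_atTop.mul_const a).const_sub 1
  refine hlim.congr' ?_
  filter_upwards [haS.eventually_ne_atTop 0] with i hi
  rw [sub_eq_iff_eq_add', ← mul_add, inv_mul_cancel₀ hi]

variable {E : Type*} [AddCommGroup E] [Module 𝕜 E] [TopologicalSpace E] [ContinuousAdd E]
  [ContinuousSMul 𝕜 E]

theorem tendsto_inv_const_add_smul_const_add {ι : Type*} {l : Filter ι} {S : ι → 𝕜} {T : ι → E}
    {p : E} (hS : Tendsto S l atTop) (hT : Tendsto (fun i => (S i)⁻¹ • T i) l (nhds p))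
    (a : 𝕜) (b : E) :
    Tendsto (fun i => (a + S i)⁻¹ • (b + T i)) l (nhds p) := by
  have hb : Tendsto (fun i => (a + S i)⁻¹ • b) l (nhds 0) := by
    simpa using (tendsto_atTop_add_const_left l a hS).inv_tendsto_atTop.smul_const b
  have hlim := hb.add ((tendsto_inv_const_add_mul_self hS a).smul hT)
  rw [zero_add, one_smul] at hlim
  refine hlim.congr' ?_
  filter_upwards [hS.eventually_ne_atTop 0] with i hi
  rw [smul_add, mul_smul, smul_inv_smul₀ hi]

theorem lui_tendsto_general {n N : ℕ → 𝕜} {x k : ℕ → E} {p : E}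
    (hrecn : ∀ᶠ j in atTop, n (j + 1) = n j + N j)
    (hrecx : ∀ᶠ j in atTop, x (j + 1) = (n j + N j)⁻¹ • (n j • x j + k j))
    (hS : Tendsto (fun K => ∑ j ∈ range K, N j) atTop atTop)
    (hT : Tendsto (fun K => (∑ j ∈ range K, N j)⁻¹ • ∑ j ∈ range K, k j) atTop (nhds p)) :
    Tendsto x atTop (nhds p) := by
  obtain ⟨a, hn⟩ := exists_eventually_eq_add_sum_range hrecn
  have hn_atTop : Tendsto n atTop atTop :=
    (tendsto_atTop_add_const_left _ a hS).congr' (EventuallyEq.symm hn)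
  have hn_ne : ∀ᶠ K in atTop, n K ≠ 0 := hn_atTop.eventually_ne_atTop 0
  have hrec_smul : ∀ᶠ j in atTop, n (j + 1) • x (j + 1) = n j • x j + k j := by
    filter_upwards [hrecn, hrecx, (tendsto_add_atTop_nat 1).eventually hn_ne] with j hnj hxj hj
    rw [hxj, ← hnj, smul_inv_smul₀ hj]
  obtain ⟨b, hnx⟩ := exists_eventually_eq_add_sum_range (f := fun j => n j • x j) hrec_smul
  refine (tendsto_inv_const_add_smul_const_add hS hT a b).congr' ?_
  filter_upwards [hn, hnx, hn_ne] with K hnK hnxK hK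
  rw [← hnK, ← hnxK, inv_smul_smul₀ hK]

end OrderedField

/-- The LUI estimate converges to the true probability whenever the cumulative
empirical frequency does, regardless of the initial estimate, the initial
strength, and how many samples are processed per iteration. -/
theorem lui_tendsto (n x N k : ℕ → ℝ) (hn0 : 0 < n 0)
    (hN : ∀ j, 0 < N j)
    (hrecn : ∀ j, n (j + 1) = n j + N j)
    (hrecx : ∀ j, x (j + 1) = (n j * x j + k j) / (n j + N j))
    (p : ℝ)
    (hS : Tendsto (fun K => ∑ j ∈ Finset.range K, N j) atTop atTop)
    (hT : Tendsto
      (fun K => (∑ j ∈ Finset.range K, k j) / (∑ j ∈ Finset.range K, N j))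
      atTop (nhds p)) :
    Tendsto x atTop (nhds p) := by
  simp only [div_eq_inv_mul, ← smul_eq_mul] at hrecx hT
  exact lui_tendsto_general (.of_forall hrecn) (.of_forall hrecx) hS hT
end

section
/- Let N, k : ℕ → ℝ with N_j > 0 and 0 ≤ k_j ≤ N_j for all j, set S_K = ∑_{j<K} N_j and T_K = ∑_{j<K} k_j, and let p ∈ [0,1]. Let c, C ∈ ℝ with 0 < c ≤ C, and let m : ℕ → ℝ be any sequence of strengths satisfying c + S_j ≤ m_j ≤ C + S_j for all j. Define x₀ ∈ ℝ and x_{j+1} = (m_j·x_j + k_j)/(m_j + N_j). If S_K → ∞ and T_K / S_K → p as K → ∞, then x_K → p; that is, the LUI estimate converges to the true probability even when each update uses a strength chosen anywhere within the current strength interval, whose endpoints differ from the cumulative sample count by bounded offsets. -/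
open Finset Filter

open Asymptotics Topology

/-!
Write `S n` and `T n` for the sums of the first `n` terms of `N` and `k`. The recursion makes the
deviation `S n • x n - T n` change by `(m n - S n) • (x n - x (n + 1))` at each step. The estimates
stay bounded, being successive weighted averages of `x 0` and the batch means, so
`x n - x (n + 1) = O(N n / (m n + N n))`, while `m ~ S` gives `m n - S n = o(m n + N n)`. The
increments of the deviation are therefore `o(N n)`; summing them, the deviation is `o(S n)`, and
`x n` has the same limit as the overall mean `T n / S n`.
-/

theorem isEquivalent_of_add_le_of_le_add {α : Type*} {l : Filter α} {u v : α → ℝ} {a b : ℝ}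
    (ha : ∀ i, a + v i ≤ u i) (hb : ∀ i, u i ≤ b + v i) (hv : Tendsto v l atTop) :
    u ~[l] v := by
  have hsub : (u - v) =O[l] (fun _ => (1 : ℝ)) :=
    isBigO_of_le' (c := max |a| |b|) l fun i => by
      simpa using abs_le_max_abs_abs (le_sub_iff_add_le.2 (ha i)) (sub_le_iff_le_add.2 (hb i))
  exact hsub.trans_isLittleO
    ((isLittleO_const_left_of_ne one_ne_zero).2 (tendsto_norm_atTop_atTop.comp hv))

section NormedGroup

variable {E : Type*} [NormedAddCommGroup E]

theorem isLittleO_sub_zero_of_isLittleO_succ_sub {f : ℕ → E} {g : ℕ → ℝ}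
    (hfg : (fun n => f (n + 1) - f n) =o[atTop] g) (hg : 0 ≤ g)
    (hsum : Tendsto (fun n => ∑ j ∈ range n, g j) atTop atTop) :
    (fun n => f n - f 0) =o[atTop] fun n => ∑ j ∈ range n, g j := by
  simpa only [sum_range_sub] using hfg.sum_range hg hsum

variable [NormedSpace ℝ E]

theorem tendsto_of_smul_sub_isLittleO {α : Type*} {l : Filter α} {s : α → ℝ} {t x : α → E} {p : E}
    (hx : (fun i => s i • x i - t i) =o[l] s) (hs : ∀ᶠ i in l, s i ≠ 0)
    (ht : Tendsto (fun i => (s i)⁻¹ • t i) l (𝓝 p)) : Tendsto x l (𝓝 p) := by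
  have hdiff : Tendsto (fun i => (s i)⁻¹ • (s i • x i - t i)) l (𝓝 0) :=
    hx.tendsto_inv_smul_nhds_zero
  refine (zero_add p ▸ hdiff.add ht).congr' ?_
  filter_upwards [hs] with i hi
  rw [smul_sub, inv_smul_smul₀ hi, sub_add_cancel]

/-- One update of the LUI method: the estimate `x`, held with strength `m`, is averaged with a batch
of size `N` and total `k`. Totals may be vectors, so that several frequencies can be estimated
at once. -/
noncomputable def luiStep (m N : ℝ) (k x : E) : E :=
  (m + N)⁻¹ • (m • x + k)

theorem add_smul_luiStep {m N : ℝ} (h : m + N ≠ 0) (k x : E) :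
    (m + N) • luiStep m N k x = m • x + k :=
  smul_inv_smul₀ h _

theorem sub_luiStep {m N : ℝ} (h : m + N ≠ 0) (k x : E) :
    x - luiStep m N k x = (m + N)⁻¹ • (N • x - k) := by
  rw [eq_inv_smul_iff₀ h, smul_sub, add_smul_luiStep h]
  module

theorem norm_luiStep_le {m N M : ℝ} {k x : E} (hm : 0 ≤ m) (hN : 0 < N)
    (hk : ‖k‖ ≤ M * N) (hx : ‖x‖ ≤ M) : ‖luiStep m N k x‖ ≤ M := by
  have hmN : 0 < m + N := by positivity
  rw [luiStep, norm_smul, norm_inv, Real.norm_of_nonneg hmN.le, inv_mul_le_iff₀ hmN]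
  calc ‖m • x + k‖ ≤ m * ‖x‖ + ‖k‖ := by
        simpa only [norm_smul, Real.norm_of_nonneg hm] using norm_add_le (m • x) k
    _ ≤ m * M + M * N := by gcongr
    _ = (m + N) * M := by ring

/-- The amount by which the total predicted by the `n`-th estimate, `x n` per sample, exceeds the
total observed in the first `n` batches. -/
def luiDeviation (N : ℕ → ℝ) (k x : ℕ → E) (n : ℕ) : E :=
  (∑ j ∈ range n, N j) • x n - ∑ j ∈ range n, k j

variable {N m : ℕ → ℝ} {k x : ℕ → E} {B : ℝ}

@[simp]
theorem luiDeviation_zero : luiDeviation N k x 0 = 0 := by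
  simp [luiDeviation]

theorem luiDeviation_succ_sub {n : ℕ} (h : m n + N n ≠ 0)
    (hx : x (n + 1) = luiStep (m n) (N n) (k n) (x n)) :
    luiDeviation N k x (n + 1) - luiDeviation N k x n =
      (m n - ∑ j ∈ range n, N j) • (x n - x (n + 1)) := by
  have hk : k n = (m n + N n) • x (n + 1) - m n • x n := by
    rw [hx, add_smul_luiStep h, add_sub_cancel_left]
  simp only [luiDeviation, sum_range_succ, hk]
  module

theorem norm_le_max_of_luiStep (hN : ∀ n, 0 < N n) (hk : ∀ n, ‖k n‖ ≤ B * N n)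
    (hm : ∀ n, 0 ≤ m n) (hx : ∀ n, x (n + 1) = luiStep (m n) (N n) (k n) (x n)) (n : ℕ) :
    ‖x n‖ ≤ max ‖x 0‖ B := by
  induction n with
  | zero => exact le_max_left _ _
  | succ n ih =>
    rw [hx]
    refine norm_luiStep_le (hm n) (hN n) ((hk n).trans ?_) ih
    exact mul_le_mul_of_nonneg_right (le_max_right _ _) (hN n).le

theorem sub_succ_isBigO_of_luiStep (hN : ∀ n, 0 < N n) (hk : ∀ n, ‖k n‖ ≤ B * N n)
    (hm : ∀ n, 0 ≤ m n) (hx : ∀ n, x (n + 1) = luiStep (m n) (N n) (k n) (x n)) :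
    (fun n => x n - x (n + 1)) =O[atTop] fun n => (m n + N n)⁻¹ * N n := by
  have hxO : x =O[atTop] fun _ => (1 : ℝ) :=
    isBigO_of_le' atTop fun n => by
      simpa only [norm_one, mul_one] using norm_le_max_of_luiStep hN hk hm hx n
  have hkO : k =O[atTop] N :=
    isBigO_of_le' atTop fun n => by simpa only [Real.norm_of_nonneg (hN n).le] using hk n
  have hNx : (fun n => N n • x n) =O[atTop] N := by
    simpa using (isBigO_refl N atTop).smul hxO
  have hstep (n : ℕ) : x n - x (n + 1) = (m n + N n)⁻¹ • (N n • x n - k n) := by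
    rw [hx, sub_luiStep (add_pos_of_nonneg_of_pos (hm n) (hN n)).ne']
  simpa only [hstep, smul_eq_mul] using
    (isBigO_refl (fun n => (m n + N n)⁻¹) atTop).smul (hNx.sub hkO)

theorem luiDeviation_succ_sub_isLittleO (hN : ∀ n, 0 < N n) (hk : ∀ n, ‖k n‖ ≤ B * N n)
    (hm : ∀ n, 0 ≤ m n) (hmS : m ~[atTop] fun n => ∑ j ∈ range n, N j)
    (hx : ∀ n, x (n + 1) = luiStep (m n) (N n) (k n) (x n)) :
    (fun n => luiDeviation N k x (n + 1) - luiDeviation N k x n) =o[atTop] N := by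
  have hmN (n : ℕ) : m n + N n ≠ 0 := (add_pos_of_nonneg_of_pos (hm n) (hN n)).ne'
  have hm_le : m =O[atTop] fun n => m n + N n :=
    isBigO_of_le atTop fun n => abs_le_abs_of_nonneg (hm n) (by simpa using (hN n).le)
  have hoffset : (fun n => m n - ∑ j ∈ range n, N j) =o[atTop] fun n => m n + N n :=
    hmS.symm.isLittleO.symm.trans_isBigO hm_le
  simpa only [luiDeviation_succ_sub (hmN _) (hx _), smul_eq_mul, mul_inv_cancel_left₀ (hmN _)]
    using hoffset.smul_isBigO (sub_succ_isBigO_of_luiStep hN hk hm hx)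

theorem lui_tendsto_varying_strength_general {p : E} (hN : ∀ n, 0 < N n)
    (hk : ∀ n, ‖k n‖ ≤ B * N n) (hm : ∀ n, 0 ≤ m n)
    (hmS : m ~[atTop] fun n => ∑ j ∈ range n, N j)
    (hx : ∀ n, x (n + 1) = luiStep (m n) (N n) (k n) (x n))
    (hS : Tendsto (fun n => ∑ j ∈ range n, N j) atTop atTop)
    (hT : Tendsto (fun n => (∑ j ∈ range n, N j)⁻¹ • ∑ j ∈ range n, k j) atTop (𝓝 p)) :
    Tendsto x atTop (𝓝 p) := by
  have hdev : luiDeviation N k x =o[atTop] fun n => ∑ j ∈ range n, N j := by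
    simpa only [luiDeviation_zero, sub_zero] using
      isLittleO_sub_zero_of_isLittleO_succ_sub
        (luiDeviation_succ_sub_isLittleO hN hk hm hmS hx) (fun n => (hN n).le) hS
  exact tendsto_of_smul_sub_isLittleO hdev (hS.eventually_ne_atTop 0) hT

end NormedGroup

/-- The LUI estimate converges to the true probability even when each update
uses a strength chosen anywhere within the current strength interval, whose
endpoints differ from the cumulative sample count by bounded offsets. -/
theorem lui_tendsto_varying_strength (N k : ℕ → ℝ)
    (hN : ∀ j, 0 < N j) (hk : ∀ j, 0 ≤ k j ∧ k j ≤ N j)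
    (p : ℝ) (hp : p ∈ Set.Icc (0 : ℝ) 1)
    (c C : ℝ) (hc : 0 < c) (hcC : c ≤ C)
    (m : ℕ → ℝ)
    (hm : ∀ j, c + ∑ i ∈ Finset.range j, N i ≤ m j ∧
      m j ≤ C + ∑ i ∈ Finset.range j, N i)
    (x : ℕ → ℝ)
    (hrecx : ∀ j, x (j + 1) = (m j * x j + k j) / (m j + N j))
    (hS : Tendsto (fun K => ∑ j ∈ Finset.range K, N j) atTop atTop)
    (hT : Tendsto
      (fun K => (∑ j ∈ Finset.range K, k j) / (∑ j ∈ Finset.range K, N j))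
      atTop (nhds p)) :
    Tendsto x atTop (nhds p) := by
  have hk_norm (j : ℕ) : ‖k j‖ ≤ 1 * N j := by
    simpa only [Real.norm_of_nonneg (hk j).1, one_mul] using (hk j).2
  have hm_nonneg (j : ℕ) : 0 ≤ m j :=
    (add_nonneg hc.le (sum_nonneg fun i _ => (hN i).le)).trans (hm j).1
  have hmS := isEquivalent_of_add_le_of_le_add (fun j => (hm j).1) (fun j => (hm j).2) hS
  refine lui_tendsto_varying_strength_general hN hk_norm hm_nonneg hmS (fun j => ?_) hS ?_
  · simpa only [luiStep, smul_eq_mul, div_eq_inv_mul] using hrecx j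
  · simpa only [smul_eq_mul, div_eq_inv_mul] using hT
end
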